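/- Let X_s be a T×N_s and X_c a T×N_c complex matrix, let γ₁, γ₂, γ₃ ≥ 0 with γ₁ + γ₂ > 0, assume the columns of X_c are linearly independent, and set A = 2((γ₁+γ₂)·I + γ₃·X_s X_s*). Then Û_s = 2(γ₂+γ₃) · A⁻¹ (I − X_c (X_c* A⁻¹ X_c)⁻¹ X_c* A⁻¹) X_s is a global minimizer of f(U) = γ₁‖U‖_F² + γ₂‖U − X_s‖_F² + γ₃‖X_s* U − I‖_F² over all T×N_s complex matrices U satisfying X_c* U = 0; that is, X_c* Û_s = 0 and f(Û_s) ≤ f(V) for every V with X_c* V = 0. -/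

import Mathlib

open Matrix

/-- Squared Frobenius norm of a complex matrix: `‖M‖_F² = Σ_{i,j} |M i j|²`. -/
noncomputable def frobSq {m n : ℕ} (M : Matrix (Fin m) (Fin n) ℂ) : ℝ :=
  ∑ i, ∑ j, ‖M i j‖ ^ 2

/-!
Up to an additive constant, the objective is the quadratic `Re tr(Uᴴ A U) / 2 - Re tr(Bᴴ U)` with
`B = 2(γ₂ + γ₃) X_s`, whose Hessian is `A`. If `U` is feasible and `A U - B` lies in the column
space of `X_c`, then the first-order term vanishes along every feasible direction, and the
second-order term is nonnegative because `A` is positive definite. The matrix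
`K = A⁻¹ (I - X_c (X_cᴴ A⁻¹ X_c)⁻¹ X_cᴴ A⁻¹)` maps every `B` to such a `U = K B`.
-/

open scoped ComplexOrder Matrix.Norms.Frobenius

section ConstrainedInverse

variable {m n k R : Type*} [Fintype m] [DecidableEq m] [Fintype k] [DecidableEq k]
  [CommRing R] [StarRing R] {A : Matrix m m R} {C : Matrix m k R}

/-- The inverse of `A` relative to the constraint `Cᴴ U = 0`: if `A` and `Cᴴ A⁻¹ C` are invertible,
it sends `B` to the `U` that solves `A U + C Λ = B`, `Cᴴ U = 0` for some multiplier `Λ`, and is the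
upper left block of the inverse of the bordered matrix `[[A, C], [Cᴴ, 0]]`. -/
noncomputable def constrainedInverse (A : Matrix m m R) (C : Matrix m k R) : Matrix m m R :=
  A⁻¹ * (1 - C * (Cᴴ * A⁻¹ * C)⁻¹ * Cᴴ * A⁻¹)

theorem conjTranspose_mul_constrainedInverse (hC : IsUnit (Cᴴ * A⁻¹ * C)) :
    Cᴴ * constrainedInverse A C = 0 :=
  calc Cᴴ * constrainedInverse A C
      = Cᴴ * A⁻¹ - (Cᴴ * A⁻¹ * C) * (Cᴴ * A⁻¹ * C)⁻¹ * (Cᴴ * A⁻¹) := by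
        simp only [constrainedInverse, Matrix.mul_sub, Matrix.mul_one, Matrix.mul_assoc]
    _ = 0 := by
        rw [mul_nonsing_inv _ ((isUnit_iff_isUnit_det _).1 hC), Matrix.one_mul, sub_self]

theorem conjTranspose_mul_mul_constrainedInverse (hA : IsUnit A) {D : Matrix m n R}
    (hD : Cᴴ * D = 0) : Dᴴ * (A * constrainedInverse A C) = Dᴴ := by
  have hDC : Dᴴ * C = 0 := by simpa using congrArg conjTranspose hD
  rw [constrainedInverse, mul_nonsing_inv_cancel_left _ _ ((isUnit_iff_isUnit_det _).1 hA)]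
  simp only [Matrix.mul_sub, Matrix.mul_one, ← Matrix.mul_assoc, hDC, Matrix.zero_mul, sub_zero]

end ConstrainedInverse

section TraceQuadratic

variable {m n k 𝕜 : Type*} [Fintype m] [Fintype n] [RCLike 𝕜]

theorem re_trace_conjTranspose_mul_comm (M N : Matrix m n 𝕜) :
    RCLike.re (Mᴴ * N).trace = RCLike.re (Nᴴ * M).trace := by
  rw [← RCLike.conj_re, starRingEnd_apply, ← trace_conjTranspose, conjTranspose_mul,
    conjTranspose_conjTranspose]

/-- The quadratic function `U ↦ Re tr(Uᴴ A U) / 2 - Re tr(Bᴴ U)` of a matrix variable. For Hermitian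
`A` its gradient at `U` is `A U - B`. -/
noncomputable def traceQuadratic (A : Matrix m m 𝕜) (B U : Matrix m n 𝕜) : ℝ :=
  RCLike.re (Uᴴ * A * U).trace / 2 - RCLike.re (Bᴴ * U).trace

theorem traceQuadratic_add {A : Matrix m m 𝕜} (hA : A.IsHermitian) (B U D : Matrix m n 𝕜) :
    traceQuadratic A B (U + D) = traceQuadratic A B U
      + RCLike.re (Dᴴ * (A * U - B)).trace + RCLike.re (Dᴴ * A * D).trace / 2 := by
  have cross_term : RCLike.re (Uᴴ * (A * D)).trace = RCLike.re (Dᴴ * (A * U)).trace := by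
    rw [re_trace_conjTranspose_mul_comm, conjTranspose_mul, hA.eq, Matrix.mul_assoc]
  simp only [traceQuadratic, conjTranspose_add, Matrix.add_mul, Matrix.mul_add, Matrix.mul_sub,
    Matrix.mul_assoc, trace_add, trace_sub, map_add, map_sub, cross_term,
    re_trace_conjTranspose_mul_comm B D]
  ring

theorem traceQuadratic_le_add {A : Matrix m m 𝕜} (hA : A.PosSemidef) {B U D : Matrix m n 𝕜}
    (hD : Dᴴ * (A * U) = Dᴴ * B) : traceQuadratic A B U ≤ traceQuadratic A B (U + D) := by
  have curvature_nonneg : 0 ≤ RCLike.re (Dᴴ * A * D).trace :=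
    (RCLike.nonneg_iff.1 (hA.conjTranspose_mul_mul_same D).trace_nonneg).1
  rw [traceQuadratic_add hA.isHermitian, Matrix.mul_sub, hD, sub_self, trace_zero, map_zero]
  linarith

theorem isMinOn_traceQuadratic_constrainedInverse_mul [DecidableEq m] [Fintype k] [DecidableEq k]
    {A : Matrix m m 𝕜} (hA : A.PosDef) {C : Matrix m k 𝕜} (hC : IsUnit (Cᴴ * A⁻¹ * C))
    (B : Matrix m n 𝕜) :
    IsMinOn (traceQuadratic A B) {U | Cᴴ * U = 0} (constrainedInverse A C * B) := by
  refine isMinOn_iff.2 fun V (hV : Cᴴ * V = 0) => ?_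
  set U := constrainedInverse A C * B
  have hD : Cᴴ * (V - U) = 0 := by
    rw [Matrix.mul_sub, hV, ← Matrix.mul_assoc, conjTranspose_mul_constrainedInverse hC,
      Matrix.zero_mul, sub_zero]
  have stationary : (V - U)ᴴ * (A * U) = (V - U)ᴴ * B := by
    rw [← Matrix.mul_assoc A, ← Matrix.mul_assoc,
      conjTranspose_mul_mul_constrainedInverse hA.isUnit hD]
  simpa using traceQuadratic_le_add hA.posSemidef stationary

end TraceQuadratic

section FrobeniusNorm

variable {m n : Type*} [Fintype m] [Fintype n]

theorem frobenius_norm_sq_eq_sum {α : Type*} [NormedAddCommGroup α] (M : Matrix m n α) :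
    ‖M‖ ^ 2 = ∑ i, ∑ j, ‖M i j‖ ^ 2 := by
  rw [frobenius_norm_def, ← Real.sqrt_eq_rpow, Real.sq_sqrt (by positivity)]
  simp only [Real.rpow_two]

variable {𝕜 : Type*} [RCLike 𝕜]

theorem frobenius_norm_sq_eq_re_trace (M : Matrix m n 𝕜) :
    ‖M‖ ^ 2 = RCLike.re (Mᴴ * M).trace := by
  simp only [frobenius_norm_sq_eq_sum, trace, diag_apply, mul_apply, conjTranspose_apply, map_sum,
    RCLike.star_def, RCLike.conj_mul, ← RCLike.ofReal_pow, RCLike.ofReal_re]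
  exact Finset.sum_comm

theorem frobenius_norm_sub_sq (M N : Matrix m n 𝕜) :
    ‖M - N‖ ^ 2 = ‖M‖ ^ 2 - 2 * RCLike.re (Nᴴ * M).trace + ‖N‖ ^ 2 := by
  simp only [frobenius_norm_sq_eq_re_trace, conjTranspose_sub, Matrix.sub_mul, Matrix.mul_sub,
    trace_sub, map_sub, re_trace_conjTranspose_mul_comm M N]
  ring

theorem penalizedLeastSquares_eq_traceQuadratic [DecidableEq m] [DecidableEq n]
    (X U : Matrix m n 𝕜) (γ₁ γ₂ γ₃ : ℝ) :
    γ₁ * ‖U‖ ^ 2 + γ₂ * ‖U - X‖ ^ 2 + γ₃ * ‖Xᴴ * U - 1‖ ^ 2 =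
      traceQuadratic ((2 : ℝ) • ((γ₁ + γ₂) • (1 : Matrix m m 𝕜) + γ₃ • (X * Xᴴ)))
        ((2 * (γ₂ + γ₃)) • X) U + (γ₂ * ‖X‖ ^ 2 + γ₃ * ‖(1 : Matrix n n 𝕜)‖ ^ 2) := by
  have gram_term : ‖Xᴴ * U‖ ^ 2 = RCLike.re (Uᴴ * (X * (Xᴴ * U))).trace := by
    rw [frobenius_norm_sq_eq_re_trace, conjTranspose_mul, conjTranspose_conjTranspose,
      Matrix.mul_assoc]
  rw [frobenius_norm_sub_sq, frobenius_norm_sub_sq, gram_term, conjTranspose_one, Matrix.one_mul,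
    frobenius_norm_sq_eq_re_trace U]
  simp only [traceQuadratic, conjTranspose_smul, star_trivial, Matrix.mul_smul, Matrix.smul_mul,
    Matrix.mul_add, Matrix.add_mul, Matrix.mul_one, Matrix.mul_assoc, trace_smul, trace_add,
    map_add, RCLike.smul_re]
  ring

end FrobeniusNorm

theorem posDef_smul_one_add_smul_mul_conjTranspose {m n 𝕜 : Type*} [Finite m] [DecidableEq m]
    [Fintype n] [RCLike 𝕜] {a b : ℝ} (ha : 0 < a) (hb : 0 ≤ b) (X : Matrix m n 𝕜) :
    (a • (1 : Matrix m m 𝕜) + b • (X * Xᴴ)).PosDef :=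
  (PosDef.one.smul ha).add_posSemidef ((posSemidef_self_mul_conjTranspose X).smul hb)

theorem stmt_5_general {m n k 𝕜 : Type*} [Fintype m] [DecidableEq m] [Fintype n] [DecidableEq n]
    [Fintype k] [DecidableEq k] [RCLike 𝕜] (Xs : Matrix m n 𝕜) (Xc : Matrix m k 𝕜)
    (γ₁ γ₂ γ₃ : ℝ) (hXc : Function.Injective Xc.mulVec) (A : Matrix m m 𝕜)
    (hA : A = (2 : ℝ) • ((γ₁ + γ₂) • (1 : Matrix m m 𝕜) + γ₃ • (Xs * Xsᴴ))) (hpos : A.PosDef)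
    (Uhat : Matrix m n 𝕜) (hU : Uhat = (2 * (γ₂ + γ₃)) • (constrainedInverse A Xc * Xs)) :
    Xcᴴ * Uhat = 0 ∧
      IsMinOn (fun U => γ₁ * ‖U‖ ^ 2 + γ₂ * ‖U - Xs‖ ^ 2 + γ₃ * ‖Xsᴴ * U - 1‖ ^ 2)
        {U | Xcᴴ * U = 0} Uhat := by
  have schur_isUnit : IsUnit (Xcᴴ * A⁻¹ * Xc) :=
    (hpos.inv.conjTranspose_mul_mul_same hXc).isUnit
  rw [← Matrix.mul_smul] at hU
  constructor
  · rw [hU, ← Matrix.mul_assoc, conjTranspose_mul_constrainedInverse schur_isUnit, Matrix.zero_mul]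
  · simp only [penalizedLeastSquares_eq_traceQuadratic, ← hA, hU]
    exact (isMinOn_traceQuadratic_constrainedInverse_mul hpos schur_isUnit _).add isMinOn_const

/-- With `γᵢ ≥ 0`, `γ₁+γ₂ > 0`, `X_c` having linearly independent columns,
and `A = 2((γ₁+γ₂)·I + γ₃·X_s X_sᴴ)`, the closed-form matrix
`Û_s = 2(γ₂+γ₃)·A⁻¹ (I − X_c (X_cᴴ A⁻¹ X_c)⁻¹ X_cᴴ A⁻¹) X_s`
is a global minimizer of `f(U) = γ₁‖U‖_F² + γ₂‖U − X_s‖_F² + γ₃‖X_sᴴ U − I‖_F²`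
over all `U` with `X_cᴴ U = 0`: it is feasible and `f(Û_s) ≤ f(V)` for all feasible `V`. -/
theorem stmt_5 (T Ns Nc : ℕ)
    (Xs : Matrix (Fin T) (Fin Ns) ℂ) (Xc : Matrix (Fin T) (Fin Nc) ℂ)
    (γ₁ γ₂ γ₃ : ℝ) (h1 : 0 ≤ γ₁) (h2 : 0 ≤ γ₂) (h3 : 0 ≤ γ₃)
    (hpos : 0 < γ₁ + γ₂)
    (hXc : Function.Injective (fun v : Fin Nc → ℂ => Xc.mulVec v))
    (f : Matrix (Fin T) (Fin Ns) ℂ → ℝ)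
    (hf : ∀ U, f U = γ₁ * frobSq U + γ₂ * frobSq (U - Xs)
      + γ₃ * frobSq (Xsᴴ * U - (1 : Matrix (Fin Ns) (Fin Ns) ℂ)))
    (A : Matrix (Fin T) (Fin T) ℂ)
    (hA : A = (2 : ℝ) • ((γ₁ + γ₂) • (1 : Matrix (Fin T) (Fin T) ℂ) + γ₃ • (Xs * Xsᴴ)))
    (Uhat : Matrix (Fin T) (Fin Ns) ℂ)
    (hU : Uhat = (2 * (γ₂ + γ₃)) •
      (A⁻¹ * ((1 : Matrix (Fin T) (Fin T) ℂ)
        - Xc * (Xcᴴ * A⁻¹ * Xc)⁻¹ * Xcᴴ * A⁻¹) * Xs)) :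
    Xcᴴ * Uhat = 0 ∧
      ∀ V : Matrix (Fin T) (Fin Ns) ℂ, Xcᴴ * V = 0 → f Uhat ≤ f V := by
  have hAposDef : A.PosDef :=
    hA ▸ (posDef_smul_one_add_smul_mul_conjTranspose hpos h3 Xs).smul two_pos
  simpa only [hf, frobSq, frobenius_norm_sq_eq_sum, isMinOn_iff, Set.mem_ofPred_eq] using
    stmt_5_general Xs Xc γ₁ γ₂ γ₃ hXc A hA hAposDef Uhat hU
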